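/- Let n ≥ 1 and let μ be a Borel probability measure on ℝ^{n×n} with bounded support whose support leaves a proper cone K ⊆ ℝⁿ invariant. Let p ≥ 1 be an integer, suppose Σ_μ is exponentially stable in pth mean (equivalently, ρ_{p,μ} < 1), and let γ ∈ (ρ_{p,μ}, 1). Then there exists a proper cone K_p ⊆ ℝ^{n^p} left invariant by {B^{⊗p} : B ∈ supp μ} and a cone linear absolute norm ‖·‖_g on ℝ^{n^p} with respect to K_p such that V(x) := ‖x^{⊗p}‖_g is a stochastic Lyapunov function for μ of degree p with growth rate γ. -/

import Mathlib

open MeasureTheory Filter Topology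
open scoped ENNReal RealInnerProductSpace

noncomputable section

/-- The space of real `n × n` matrices. -/
abbrev Mat (n : ℕ) := Matrix (Fin n) (Fin n) ℝ

/-- Euclidean space `ℝⁿ`. -/
abbrev EucSp (n : ℕ) := EuclideanSpace ℝ (Fin n)

/-- The (Borel = product) measurable structure on `n × n` real matrices. -/
instance matMeasurableSpace (n : ℕ) : MeasurableSpace (Mat n) :=
  inferInstanceAs (MeasurableSpace (Fin n → Fin n → ℝ))

/-- Lebesgue measure on the space of `n × n` real matrices `≅ ℝ^{n²}`. -/
def matLebesgue (n : ℕ) : Measure (Mat n) :=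
  (inferInstance : MeasureSpace (Fin n → Fin n → ℝ)).volume

/-- The operator norm (maximal singular value) of a real square matrix, induced by the
Euclidean norm. -/
def opNorm {m : ℕ} (A : Matrix (Fin m) (Fin m) ℝ) : ℝ :=
  ‖LinearMap.toContinuousLinearMap (Matrix.toEuclideanLin A)‖

/-- The product `A_k ⋯ A_1` of the matrices `f 0 = A_1, …, f (k-1) = A_k` (decreasing order of
indices). -/
def prodRev {m k : ℕ} (f : Fin k → Matrix (Fin m) (Fin m) ℝ) : Matrix (Fin m) (Fin m) ℝ :=
  ((List.ofFn f).reverse).prod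

/-- The joint spectral radius of a set of matrices:
`ρ̂(M) = limsup_{k→∞} sup_{A₁,…,A_k ∈ M} ‖A_k ⋯ A₁‖^(1/k)`. -/
def jsr {m : ℕ} (M : Set (Matrix (Fin m) (Fin m) ℝ)) : ℝ :=
  limsup (fun k : ℕ =>
    sSup {x : ℝ | ∃ f : Fin k → Matrix (Fin m) (Fin m) ℝ,
      (∀ i, f i ∈ M) ∧ x = opNorm (prodRev f)} ^ ((1 : ℝ) / k)) atTop

/-- `E[‖A_k ⋯ A₁‖^p]` where `A₁, …, A_k` are i.i.d. with law `μ`. -/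
def kExpNorm {m : ℕ} (μ : Measure (Mat m)) (p k : ℕ) : ℝ :=
  ∫ f : Fin k → Mat m, opNorm (prodRev f) ^ p ∂(Measure.pi fun _ => μ)

/-- The `L^p`-norm joint spectral radius (`p`-radius) of a probability distribution `μ`:
`ρ_{p,μ} = lim_{k→∞} (E[‖A_k ⋯ A₁‖^p])^{1/(pk)}`; since this limit exists for distributions
with bounded support, it coincides with the `limsup` used here. -/
def pRadius {m : ℕ} (μ : Measure (Mat m)) (p : ℕ) : ℝ :=
  limsup (fun k : ℕ => kExpNorm μ p k ^ (1 / (p * k : ℝ))) atTop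

/-- The (topological) support of a measure on matrices. -/
def msupport {m : ℕ} (μ : Measure (Mat m)) : Set (Mat m) :=
  {A | ∀ ε : ℝ, 0 < ε → μ {B | opNorm (B - A) < ε} ≠ 0}

/-- `μ` has bounded support. -/
def HasBoundedSupport {m : ℕ} (μ : Measure (Mat m)) : Prop :=
  ∃ C : ℝ, ∀ A ∈ msupport μ, opNorm A ≤ C

/-- A proper cone of `ℝⁿ`: a closed convex pointed cone with nonempty interior. -/
structure IsProperCone {m : ℕ} (K : Set (EucSp m)) : Prop where
  isClosed : IsClosed K
  convex : Convex ℝ K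
  smul_mem : ∀ c : ℝ, 0 ≤ c → ∀ x ∈ K, c • x ∈ K
  pointed : ∀ x ∈ K, -x ∈ K → x = 0
  solid : (interior K).Nonempty

/-- A matrix `A` leaves a cone `K` invariant: `A K ⊆ K`. -/
def LeavesInv {m : ℕ} (A : Matrix (Fin m) (Fin m) ℝ) (K : Set (EucSp m)) : Prop :=
  ∀ x ∈ K, Matrix.toEuclideanLin A x ∈ K

/-- A set of matrices leaves a cone invariant if each of its members does. -/
def SetLeavesInv {m : ℕ} (S : Set (Matrix (Fin m) (Fin m) ℝ)) (K : Set (EucSp m)) : Prop :=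
  ∀ A ∈ S, LeavesInv A K

/-- `π(K)`: the set of matrices leaving the cone `K` invariant. -/
def piCone {m : ℕ} (K : Set (EucSp m)) : Set (Mat m) := {A | LeavesInv A K}

/-- Distance (valued in `ℝ≥0∞`, with `d(A, ∅) = ∞`) from a matrix to a set of matrices, in the
operator norm. -/
def edistSet {m : ℕ} (A : Mat m) (S : Set (Mat m)) : ℝ≥0∞ :=
  ⨅ B ∈ S, ENNReal.ofReal (opNorm (A - B))

/-- Hausdorff distance between two sets of matrices (operator norm, valued in `ℝ≥0∞`). -/
def hausdorffDistE {m : ℕ} (S T : Set (Mat m)) : ℝ≥0∞ :=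
  max (⨆ A ∈ S, edistSet A T) (⨆ B ∈ T, edistSet B S)

/-- `S_M = {A : A − M leaves K invariant}`, i.e. `{A : A ≥^K M}`. -/
def matSSet {m : ℕ} (K : Set (EucSp m)) (M : Mat m) : Set (Mat m) :=
  {A | LeavesInv (A - M) K}

/-- `π_r = {M ∈ π(K) : d(M, ∂π(K)) ≥ r}`. -/
def piConeR {m : ℕ} (K : Set (EucSp m)) (r : ℝ) : Set (Mat m) :=
  {M | M ∈ piCone K ∧ ENNReal.ofReal r ≤ edistSet M (frontier (piCone K))}

/-- `M_r = (π_r ∩ supp μ_c) ∪ supp μ_s`. -/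
def MrSet {m : ℕ} (K : Set (EucSp m)) (μc μs : Measure (Mat m)) (r : ℝ) : Set (Mat m) :=
  (piConeR K r ∩ msupport μc) ∪ msupport μs

/-- The measure `ν` is zero or a finite linear combination (with positive coefficients) of
Dirac measures. -/
def IsFiniteDiracComb {m : ℕ} (ν : Measure (Mat m)) : Prop :=
  ν = 0 ∨ ∃ (N : ℕ) (w : Fin N → ℝ) (Ms : Fin N → Mat m),
    (∀ i, 0 < w i) ∧ ν = ∑ i, ENNReal.ofReal (w i) • Measure.dirac (Ms i)

/-- The `p`-th Kronecker power of a square matrix (with `A^{⊗0} = 1`, `A^{⊗(p+1)} = A^{⊗p} ⊗ A`). -/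
def kronPow {m : ℕ} (A : Matrix (Fin m) (Fin m) ℝ) :
    (p : ℕ) → Matrix (Fin (m ^ p)) (Fin (m ^ p)) ℝ
  | 0 => 1
  | p + 1 =>
    Matrix.reindex (finProdFinEquiv.trans (finCongr (pow_succ m p).symm))
      (finProdFinEquiv.trans (finCongr (pow_succ m p).symm))
      (Matrix.kroneckerMap (· * ·) (kronPow A p) A)

/-- The `q`-th Kronecker power of a vector. -/
def vecKronPow {m : ℕ} (x : EucSp m) : (q : ℕ) → EucSp (m ^ q)
  | 0 => WithLp.toLp 2 fun _ => 1
  | q + 1 => WithLp.toLp 2 fun i =>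
      vecKronPow x q (finProdFinEquiv.symm (finCongr (pow_succ m q) i)).1 *
        x (finProdFinEquiv.symm (finCongr (pow_succ m q) i)).2

/-- The spectral radius of a real square matrix: the largest modulus of a complex eigenvalue. -/
def specRad {m : ℕ} (A : Matrix (Fin m) (Fin m) ℝ) : ℝ :=
  sSup ((norm : ℂ → ℝ) '' spectrum ℂ (A.map Complex.ofReal))

/-- The entrywise expectation `E[A^{⊗p}]` of the `p`-th Kronecker power under `μ`. -/
def kronExp {m : ℕ} (μ : Measure (Mat m)) (p : ℕ) :
    Matrix (Fin (m ^ p)) (Fin (m ^ p)) ℝ :=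
  Matrix.of fun i j => ∫ A, kronPow A p i j ∂μ

/-- `V` is a stochastic Lyapunov function for `μ` of degree `p` with growth rate `γ`. -/
def IsStochLyap {m : ℕ} (μ : Measure (Mat m)) (p : ℕ) (γ : ℝ) (V : EucSp m → ℝ) : Prop :=
  (∃ C₁ : ℝ, 0 < C₁ ∧ ∃ C₂ : ℝ, 0 < C₂ ∧
    ∀ x : EucSp m, C₁ * ‖x‖ ^ p ≤ V x ∧ V x ≤ C₂ * ‖x‖ ^ p) ∧
  ∀ x : EucSp m, (∫ A, V (Matrix.toEuclideanLin A x) ∂μ) ≤ γ ^ p * V x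

/-- `ν` is a norm on `ℝ^m`. -/
def IsNormFn {m : ℕ} (ν : EucSp m → ℝ) : Prop :=
  (∀ x, 0 ≤ ν x) ∧ (∀ x, ν x = 0 ↔ x = 0) ∧
  (∀ (a : ℝ) (x : EucSp m), ν (a • x) = |a| * ν x) ∧
  (∀ x y : EucSp m, ν (x + y) ≤ ν x + ν y)

/-- `ν` is cone absolute with respect to `K`:
`ν x = inf {ν (v + w) : v, w ∈ K, x = v − w}`. -/
def IsConeAbsolute {m : ℕ} (K : Set (EucSp m)) (ν : EucSp m → ℝ) : Prop :=
  ∀ x : EucSp m, ν x = sInf {r : ℝ | ∃ v ∈ K, ∃ w ∈ K, x = v - w ∧ r = ν (v + w)}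

/-- The dual cone `K* = {f : fᵀx ≥ 0 for all x ∈ K}`. -/
def dualConeSet {m : ℕ} (K : Set (EucSp m)) : Set (EucSp m) :=
  {f | ∀ x ∈ K, 0 ≤ ⟪f, x⟫}

/-- `ν` is cone linear with respect to `K`: `ν = ⟪f, ·⟫` on `K` for some `f ∈ K*`. -/
def IsConeLinear {m : ℕ} (K : Set (EucSp m)) (ν : EucSp m → ℝ) : Prop :=
  ∃ f ∈ dualConeSet K, ∀ x ∈ K, ν x = ⟪f, x⟫

/-- The matrix norm induced by a norm `ν` on `ℝ^m`. -/
def inducedNormFn {m : ℕ} (ν : EucSp m → ℝ) (A : Matrix (Fin m) (Fin m) ℝ) : ℝ :=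
  sSup {c : ℝ | ∃ x : EucSp m, x ≠ 0 ∧ c = ν (Matrix.toEuclideanLin A x) / ν x}

/-!
Let `K_p` be the cone of tensors on which all products `f₁ ⊗ ⋯ ⊗ f_p` with `fᵢ ∈ K*` are
nonnegative. It is proper, and `B^{⊗p}` preserves it whenever `B` preserves `K`, hence so does the
mean `M = E[A^{⊗p}]`. Independence gives `M ^ k = E[(A_k ⋯ A₁)^{⊗p}]`, and `‖B^{⊗p}‖ ≤ ‖B‖ ^ p`, so
`‖M ^ k‖ ≤ E[‖A_k ⋯ A₁‖ ^ p] = o(γ ^ (p k))`. Summing the orbit of a functional `h₀` interior to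
`K_p*` under the transpose of `γ ^ (-p) • M`, up to a power that is small enough, gives an interior
functional `h` of `K_p*` with `hᵀ M ≤ γ ^ p • hᵀ` on `K_p`. The norm
`‖x‖_g = inf {hᵀ(v + w) : v, w ∈ K_p, x = v - w}` equals `h` on `K_p`; applying `A^{⊗p}` to a
decomposition `x^{⊗p} = v - w` and averaging gives `E[V(Ax)] ≤ hᵀ M (v + w) ≤ γ ^ p hᵀ(v + w)`,
whose infimum over decompositions is `γ ^ p V(x)`.
-/

section DualCone

variable {m : ℕ} {A : Mat m} {S C : Set (EucSp m)} {x : EucSp m}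

lemma dualConeSet_eq_innerDual (S : Set (EucSp m)) :
    dualConeSet S = (ProperCone.innerDual S : Set (EucSp m)) := by
  ext f
  simp only [dualConeSet, Set.mem_ofPred_eq, SetLike.mem_coe, ProperCone.mem_innerDual,
    real_inner_comm]

lemma isClosed_dualConeSet (S : Set (EucSp m)) : IsClosed (dualConeSet S) :=
  dualConeSet_eq_innerDual S ▸ (ProperCone.innerDual S).isClosed

lemma convex_dualConeSet (S : Set (EucSp m)) : Convex ℝ (dualConeSet S) :=
  dualConeSet_eq_innerDual S ▸ (ProperCone.innerDual S).toPointedCone.convex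

lemma subset_dualConeSet_dualConeSet (S : Set (EucSp m)) :
    S ⊆ dualConeSet (dualConeSet S) := fun x hx f hf => by
  rw [real_inner_comm]
  exact hf x hx

lemma mem_interior_dualConeSet_iff :
    x ∈ interior (dualConeSet S) ↔ ∃ c : ℝ, 0 < c ∧ ∀ f ∈ S, c * ‖f‖ ≤ ⟪x, f⟫ := by
  constructor
  · intro hx
    obtain ⟨r, hr, hball⟩ := Metric.nhds_basis_closedBall.mem_iff.1 (mem_interior_iff_mem_nhds.1 hx)
    refine ⟨r, hr, fun f hf => ?_⟩
    rcases eq_or_ne f 0 with rfl | hf0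
    · simp only [norm_zero, mul_zero, inner_zero_right, le_refl]
    have hfnorm : ‖f‖ ≠ 0 := norm_ne_zero_iff.2 hf0
    have hmem : x - (r / ‖f‖) • f ∈ dualConeSet S := by
      refine hball ?_
      rw [mem_closedBall_iff_norm, sub_sub_cancel_left, norm_neg, norm_smul, norm_div, norm_norm,
        Real.norm_of_nonneg hr.le, div_mul_cancel₀ r hfnorm]
    have hcancel : r / ‖f‖ * ‖f‖ ^ 2 = r * ‖f‖ := by field_simp
    rw [← hcancel, ← real_inner_self_eq_norm_sq, ← real_inner_smul_left, ← sub_nonneg,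
      ← inner_sub_left]
    exact hmem f hf
  · rintro ⟨c, hc, hcS⟩
    refine mem_interior.2 ⟨Metric.ball x c, fun y hy f hf => ?_, Metric.isOpen_ball,
      Metric.mem_ball_self hc⟩
    have hdiff : ‖y - x‖ * ‖f‖ ≤ c * ‖f‖ := by
      gcongr
      exact (mem_ball_iff_norm.1 hy).le
    have hsub : ⟪x, f⟫ - ⟪y, f⟫ ≤ ‖y - x‖ * ‖f‖ := by
      rw [← inner_sub_left, norm_sub_rev]
      exact real_inner_le_norm _ _
    linarith [hcS f hf]

lemma isProperCone_dualConeSet (hspan : Submodule.span ℝ S = ⊤)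
    (hint : (interior (dualConeSet S)).Nonempty) : IsProperCone (dualConeSet S) where
  isClosed := isClosed_dualConeSet S
  convex := convex_dualConeSet S
  smul_mem c hc f hf x hx := by
    rw [real_inner_smul_left]
    exact mul_nonneg hc (hf x hx)
  pointed f hf hf' := by
    have hperp : S ⊆ (ℝ ∙ f)ᗮ := fun x hx => by
      rw [SetLike.mem_coe, Submodule.mem_orthogonal_singleton_iff_inner_right]
      have hneg := hf' x hx
      rw [inner_neg_left] at hneg
      exact le_antisymm (by linarith) (hf x hx)
    have hself : f ∈ (ℝ ∙ f)ᗮ := Submodule.span_le.2 hperp (hspan ▸ Submodule.mem_top)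
    exact inner_self_eq_zero.1 (Submodule.mem_orthogonal_singleton_iff_inner_right.1 hself)
  solid := hint

lemma inner_toEuclideanLin_transpose (A : Mat m) (x y : EucSp m) :
    ⟪Matrix.toEuclideanLin A.transpose x, y⟫ = ⟪x, Matrix.toEuclideanLin A y⟫ := by
  rw [← Matrix.conjTranspose_eq_transpose_of_trivial,
    Matrix.toEuclideanLin_conjTranspose_eq_adjoint, LinearMap.adjoint_inner_left]

lemma LeavesInv.transpose_dualConeSet (hA : LeavesInv A S) :
    LeavesInv A.transpose (dualConeSet S) := fun f hf x hx => by
  rw [inner_toEuclideanLin_transpose]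
  exact hf _ (hA x hx)

lemma leavesInv_dualConeSet_of_transpose (hA : LeavesInv A.transpose S) :
    LeavesInv A (dualConeSet S) :=
  A.transpose_transpose ▸ hA.transpose_dualConeSet

lemma LeavesInv.pow (hA : LeavesInv A S) (k : ℕ) : LeavesInv (A ^ k) S := by
  induction k with
  | zero => exact fun x hx => by rwa [pow_zero, Matrix.toLpLin_one, LinearMap.id_apply]
  | succ k ih =>
    intro x hx
    rw [pow_succ, Matrix.toLpLin_mul_same, LinearMap.comp_apply]
    exact ih _ (hA x hx)

lemma IsProperCone.zero_mem (hC : IsProperCone C) : (0 : EucSp m) ∈ C := by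
  obtain ⟨x, hx⟩ := hC.solid
  simpa only [zero_smul] using hC.smul_mem 0 le_rfl x (interior_subset hx)

lemma IsProperCone.add_mem (hC : IsProperCone C) {x y : EucSp m} (hx : x ∈ C) (hy : y ∈ C) :
    x + y ∈ C := by
  have hmid : (2⁻¹ : ℝ) • x + (2⁻¹ : ℝ) • y ∈ C :=
    hC.convex hx hy (by norm_num) (by norm_num) (by norm_num)
  simpa only [← smul_add, smul_inv_smul₀ (two_ne_zero : (2 : ℝ) ≠ 0)] using
    hC.smul_mem 2 zero_le_two _ hmid

/-- A proper cone of this file as one of Mathlib's `ProperCone`s, which are closed convex cones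
that need be neither pointed nor solid. -/
def IsProperCone.toProperCone (hC : IsProperCone C) : ProperCone ℝ (EucSp m) where
  carrier := C
  add_mem' := hC.add_mem
  zero_mem' := hC.zero_mem
  smul_mem' c x hx := hC.smul_mem c c.2 x hx
  isClosed' := hC.isClosed

lemma IsProperCone.dualConeSet_dualConeSet (hC : IsProperCone C) :
    dualConeSet (dualConeSet C) = C := by
  rw [dualConeSet_eq_innerDual, dualConeSet_eq_innerDual]
  exact congrArg SetLike.coe (ProperCone.innerDual_innerDual hC.toProperCone)

lemma IsProperCone.span_dualConeSet (hC : IsProperCone C) :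
    Submodule.span ℝ (dualConeSet C) = ⊤ := by
  rw [← Submodule.orthogonal_eq_bot_iff, Submodule.eq_bot_iff]
  intro x hx
  have hperp : ∀ f ∈ dualConeSet C, ⟪x, f⟫ = 0 := fun f hf =>
    (Submodule.mem_orthogonal' _ _).1 hx f (Submodule.subset_span hf)
  refine hC.pointed x ?_ ?_ <;> rw [← hC.dualConeSet_dualConeSet]
  · exact fun f hf => (hperp f hf).ge
  · exact fun f hf => by rw [inner_neg_left, hperp f hf, neg_zero]

lemma IsProperCone.interior_dualConeSet_nonempty (hC : IsProperCone C) :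
    (interior (dualConeSet C)).Nonempty := by
  have hzero : (0 : EucSp m) ∈ dualConeSet C := fun x _ => (inner_zero_left x).ge
  rw [(convex_dualConeSet C).interior_nonempty_iff_affineSpan_eq_top,
    ← Set.insert_eq_of_mem hzero]
  apply SetLike.coe_injective
  rw [affineSpan_insert_zero, hC.span_dualConeSet]
  rfl

end DualCone

section Tensor

variable {ι κ l : Type*}

/-- The tensor product of vectors as a bilinear map, the coordinates of the product being indexed
by `l` through `e`. -/
def vecTensor (e : ι × κ ≃ l) :
    EuclideanSpace ℝ ι →ₗ[ℝ] EuclideanSpace ℝ κ →ₗ[ℝ] EuclideanSpace ℝ l :=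
  LinearMap.mk₂ ℝ (fun u v => WithLp.toLp 2 fun i => u (e.symm i).1 * v (e.symm i).2)
    (fun _ _ _ => PiLp.ext fun _ => add_mul _ _ _)
    (fun _ _ _ => PiLp.ext fun _ => mul_assoc _ _ _)
    (fun _ _ _ => PiLp.ext fun _ => mul_add _ _ _)
    (fun _ _ _ => PiLp.ext fun _ => mul_left_comm _ _ _)

lemma vecTensor_apply (e : ι × κ ≃ l) (u : EuclideanSpace ℝ ι) (v : EuclideanSpace ℝ κ) (i : l) :
    vecTensor e u v i = u (e.symm i).1 * v (e.symm i).2 := rfl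

lemma vecTensor_single [DecidableEq ι] [DecidableEq κ] [DecidableEq l] (e : ι × κ ≃ l) (i : ι)
    (j : κ) : vecTensor e (EuclideanSpace.single i 1) (EuclideanSpace.single j 1) =
      EuclideanSpace.single (e (i, j)) 1 := by
  ext k
  obtain ⟨⟨i', j'⟩, rfl⟩ := e.surjective k
  simp only [vecTensor_apply, e.symm_apply_apply, PiLp.single_apply,
    ite_zero_mul_ite_zero, mul_one, e.apply_eq_iff_eq, Prod.mk.injEq]

lemma span_image2_vecTensor [Finite l] (e : ι × κ ≃ l) {S : Set (EuclideanSpace ℝ ι)}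
    {T : Set (EuclideanSpace ℝ κ)} (hS : Submodule.span ℝ S = ⊤) (hT : Submodule.span ℝ T = ⊤) :
    Submodule.span ℝ (Set.image2 (fun u v => vecTensor e u v) S T) = ⊤ := by
  classical
  cases nonempty_fintype l
  rw [← Submodule.map₂_span_span, hS, hT, eq_top_iff,
    ← (EuclideanSpace.basisFun l ℝ).toBasis.span_eq, Submodule.span_le]
  rintro _ ⟨k, rfl⟩
  obtain ⟨⟨i, j⟩, rfl⟩ := e.surjective k
  rw [OrthonormalBasis.coe_toBasis, EuclideanSpace.basisFun_apply, ← vecTensor_single]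
  exact Submodule.apply_mem_map₂ _ Submodule.mem_top Submodule.mem_top

variable [Fintype ι] [Fintype κ] [Fintype l]

lemma inner_vecTensor (e : ι × κ ≃ l) (u u' : EuclideanSpace ℝ ι) (v v' : EuclideanSpace ℝ κ) :
    ⟪vecTensor e u v, vecTensor e u' v'⟫ = ⟪u, u'⟫ * ⟪v, v'⟫ := by
  simp only [PiLp.inner_apply, vecTensor_apply, RCLike.inner_apply, conj_trivial]
  rw [← e.sum_comp, Fintype.sum_prod_type, Finset.sum_mul_sum]
  simp only [Equiv.symm_apply_apply, mul_mul_mul_comm]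

lemma norm_vecTensor (e : ι × κ ≃ l) (u : EuclideanSpace ℝ ι) (v : EuclideanSpace ℝ κ) :
    ‖vecTensor e u v‖ = ‖u‖ * ‖v‖ := by
  rw [← sq_eq_sq₀ (norm_nonneg _) (by positivity), mul_pow]
  simp only [← real_inner_self_eq_norm_sq, inner_vecTensor]

lemma toEuclideanLin_kronecker_vecTensor [DecidableEq ι] [DecidableEq κ] [DecidableEq l]
    (e : ι × κ ≃ l) (A : Matrix ι ι ℝ) (B : Matrix κ κ ℝ) (u : EuclideanSpace ℝ ι)
    (v : EuclideanSpace ℝ κ) :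
    Matrix.toEuclideanLin (Matrix.reindex e e (Matrix.kroneckerMap (· * ·) A B))
      (vecTensor e u v) =
    vecTensor e (Matrix.toEuclideanLin A u) (Matrix.toEuclideanLin B v) := by
  ext i
  simp only [Matrix.ofLp_toLpLin, Matrix.toLin'_apply, vecTensor_apply, Matrix.mulVec, dotProduct,
    Matrix.reindex_apply, Matrix.submatrix_apply, Matrix.kroneckerMap_apply]
  rw [← e.sum_comp, Fintype.sum_prod_type, Finset.sum_mul_sum]
  simp only [Equiv.symm_apply_apply, mul_mul_mul_comm]

end Tensor

section KronPow

variable {m : ℕ}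

/-- The index equivalence through which `kronPow` and `vecKronPow` identify the coordinates of
`ℝ^{m^p} ⊗ ℝ^m` with those of `ℝ^{m^(p+1)}`. -/
def kronEquiv (m p : ℕ) : Fin (m ^ p) × Fin m ≃ Fin (m ^ (p + 1)) :=
  finProdFinEquiv.trans (finCongr (pow_succ m p).symm)

lemma kronPow_succ (A : Mat m) (p : ℕ) :
    kronPow A (p + 1) = Matrix.reindex (kronEquiv m p) (kronEquiv m p)
      (Matrix.kroneckerMap (· * ·) (kronPow A p) A) := rfl

lemma vecKronPow_succ (x : EucSp m) (p : ℕ) :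
    vecKronPow x (p + 1) = vecTensor (kronEquiv m p) (vecKronPow x p) x := rfl

lemma norm_vecKronPow (x : EucSp m) (p : ℕ) : ‖vecKronPow x p‖ = ‖x‖ ^ p := by
  induction p with
  | zero =>
    change ‖(WithLp.toLp 2 fun _ => 1 : EucSp 1)‖ = ‖x‖ ^ 0
    simp [EuclideanSpace.norm_eq]
  | succ p ih => rw [vecKronPow_succ, norm_vecTensor, ih, pow_succ]

lemma toEuclideanLin_kronPow_vecKronPow (A : Mat m) (x : EucSp m) (p : ℕ) :
    Matrix.toEuclideanLin (kronPow A p) (vecKronPow x p) =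
      vecKronPow (Matrix.toEuclideanLin A x) p := by
  induction p with
  | zero => rw [kronPow, Matrix.toLpLin_one, LinearMap.id_apply, vecKronPow, vecKronPow]
  | succ p ih =>
    rw [kronPow_succ, vecKronPow_succ, toEuclideanLin_kronecker_vecTensor, ih, vecKronPow_succ]

lemma kronPow_transpose (A : Mat m) (p : ℕ) : (kronPow A p).transpose = kronPow A.transpose p := by
  induction p with
  | zero => exact Matrix.transpose_one
  | succ p ih =>
    rw [kronPow_succ, Matrix.transpose_reindex, ← Matrix.kroneckerMap_transpose, ih, kronPow_succ]

lemma kronPow_one (p : ℕ) : kronPow (1 : Mat m) p = 1 := by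
  induction p with
  | zero => rfl
  | succ p ih =>
    rw [kronPow_succ, ih, Matrix.reindex_apply]
    exact (congrArg (fun X => Matrix.submatrix X _ _) Matrix.one_kronecker_one).trans
      (Matrix.submatrix_one_equiv _)

lemma kronPow_mul (A B : Mat m) (p : ℕ) : kronPow (A * B) p = kronPow A p * kronPow B p := by
  induction p with
  | zero => exact (mul_one _).symm
  | succ p ih =>
    simp only [kronPow_succ, ih, Matrix.reindex_apply, Matrix.submatrix_mul_equiv]
    exact congrArg (fun X => Matrix.submatrix X _ _) (Matrix.mul_kronecker_mul _ _ _ _)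

/-- The `p`-th Kronecker power as a homomorphism of multiplicative monoids. -/
def kronPowHom (m p : ℕ) : Mat m →* Mat (m ^ p) where
  toFun A := kronPow A p
  map_one' := kronPow_one p
  map_mul' A B := kronPow_mul A B p

lemma continuous_kronPow (p : ℕ) : Continuous fun A : Mat m => kronPow A p := by
  induction p with
  | zero => exact continuous_const
  | succ p ih =>
    refine continuous_matrix fun i j => ?_
    simp only [kronPow_succ, Matrix.reindex_apply, Matrix.submatrix_apply,
      Matrix.kroneckerMap_apply]
    exact (ih.matrix_elem _ _).mul (continuous_id.matrix_elem _ _)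

/-- The set of pure tensors `f₁ ⊗ ⋯ ⊗ f_p` with all factors in `S`. -/
def pureTensors (S : Set (EucSp m)) : (p : ℕ) → Set (EucSp (m ^ p))
  | 0 => {WithLp.toLp 2 fun _ => 1}
  | p + 1 => Set.image2 (fun t f => vecTensor (kronEquiv m p) t f) (pureTensors S p) S

variable {S K : Set (EucSp m)} {A : Mat m}

lemma span_pureTensors (hS : Submodule.span ℝ S = ⊤) (p : ℕ) :
    Submodule.span ℝ (pureTensors S p) = ⊤ := by
  induction p with
  | zero =>
    have hfinrank : Module.finrank ℝ (EucSp (m ^ 0)) = 1 := by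
      rw [finrank_euclideanSpace_fin, pow_zero]
    have hne : (WithLp.toLp 2 fun _ => 1 : EucSp (m ^ 0)) ≠ 0 :=
      norm_ne_zero_iff.1 ((norm_vecKronPow (0 : EucSp m) 0).trans_ne one_ne_zero)
    exact (finrank_eq_one_iff_of_nonzero _ hne).1 hfinrank
  | succ p ih => exact span_image2_vecTensor _ ih hS

lemma LeavesInv.pureTensors (hA : LeavesInv A S) (p : ℕ) :
    LeavesInv (kronPow A p) (pureTensors S p) := by
  induction p with
  | zero => exact fun t ht => by rwa [kronPow, Matrix.toLpLin_one, LinearMap.id_apply]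
  | succ p ih =>
    rintro _ ⟨t, ht, f, hf, rfl⟩
    exact ⟨_, ih t ht, _, hA f hf, (toEuclideanLin_kronecker_vecTensor _ _ _ t f).symm⟩

lemma vecKronPow_mem_interior_dualConeSet_pureTensors {x : EucSp m}
    (hx : x ∈ interior (dualConeSet S)) (p : ℕ) :
    vecKronPow x p ∈ interior (dualConeSet (pureTensors S p)) := by
  rw [mem_interior_dualConeSet_iff] at hx ⊢
  obtain ⟨c, hc, hcS⟩ := hx
  refine ⟨c ^ p, pow_pos hc p, ?_⟩
  induction p with
  | zero =>
    rintro _ rfl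
    change c ^ 0 * ‖vecKronPow x 0‖ ≤ ⟪vecKronPow x 0, vecKronPow x 0⟫
    simp only [real_inner_self_eq_norm_sq, norm_vecKronPow, pow_zero, mul_one, one_pow, le_refl]
  | succ p ih =>
    rintro _ ⟨t, ht, f, hf, rfl⟩
    rw [vecKronPow_succ, inner_vecTensor, norm_vecTensor, pow_succ, mul_mul_mul_comm]
    have hcf : 0 ≤ c * ‖f‖ := by positivity
    have hct : 0 ≤ c ^ p * ‖t‖ := by positivity
    exact mul_le_mul (ih t ht) (hcS f hf) hcf (hct.trans (ih t ht))

/-- The cone of tensors `T ∈ ℝ^{m^p}` with `⟪f₁ ⊗ ⋯ ⊗ f_p, T⟫ ≥ 0` for all `f₁, …, f_p ∈ K*`, the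
largest tensor power of `K`. -/
def kronCone (K : Set (EucSp m)) (p : ℕ) : Set (EucSp (m ^ p)) :=
  dualConeSet (pureTensors (dualConeSet K) p)

lemma IsProperCone.kronCone (hK : IsProperCone K) (p : ℕ) : IsProperCone (kronCone K p) := by
  obtain ⟨x, hx⟩ := hK.solid
  exact isProperCone_dualConeSet (span_pureTensors hK.span_dualConeSet p)
    ⟨_, vecKronPow_mem_interior_dualConeSet_pureTensors
      (interior_mono (subset_dualConeSet_dualConeSet K) hx) p⟩

lemma LeavesInv.kronCone (hA : LeavesInv A K) (p : ℕ) :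
    LeavesInv (kronPow A p) (kronCone K p) :=
  leavesInv_dualConeSet_of_transpose
    (kronPow_transpose A p ▸ hA.transpose_dualConeSet.pureTensors p)

end KronPow

section ConeNorm

variable {m : ℕ} {C : Set (EucSp m)} {h : EucSp m}

/-- The cone linear absolute norm `x ↦ inf {⟪h, v + w⟫ : v, w ∈ C, x = v - w}` determined by a
proper cone `C` and a functional `h` in the interior of its dual cone. -/
def coneNorm (C : Set (EucSp m)) (h x : EucSp m) : ℝ :=
  sInf {r : ℝ | ∃ v ∈ C, ∃ w ∈ C, x = v - w ∧ r = ⟪h, v + w⟫}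

lemma IsProperCone.exists_decomposition (hC : IsProperCone C) :
    ∃ D : ℝ, 0 < D ∧ ∀ x : EucSp m, ∃ v ∈ C, ∃ w ∈ C, x = v - w ∧ ‖v + w‖ ≤ D * ‖x‖ := by
  obtain ⟨y, hy⟩ := hC.solid
  obtain ⟨r, hr, hball⟩ := Metric.nhds_basis_closedBall.mem_iff.1 (mem_interior_iff_mem_nhds.1 hy)
  refine ⟨2 / r * ‖y‖ + 1, by positivity, fun x => ?_⟩
  rcases eq_or_ne x 0 with rfl | hx0
  · exact ⟨0, hC.zero_mem, 0, hC.zero_mem, (sub_zero 0).symm, by simp⟩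
  have hx : 0 < ‖x‖ := norm_pos_iff.2 hx0
  have hmem : y + (r / ‖x‖) • x ∈ C := by
    refine hball ?_
    rw [mem_closedBall_iff_norm, add_sub_cancel_left, norm_smul, norm_div, norm_norm,
      Real.norm_of_nonneg hr.le, div_mul_cancel₀ r hx.ne']
  have ht : 0 ≤ ‖x‖ / r := by positivity
  have hv : (‖x‖ / r) • (y + (r / ‖x‖) • x) = (‖x‖ / r) • y + x := by
    rw [smul_add, ← inv_div ‖x‖ r, smul_inv_smul₀ (by positivity)]
  refine ⟨(‖x‖ / r) • y + x, hv ▸ hC.smul_mem _ ht _ hmem, (‖x‖ / r) • y,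
    hC.smul_mem _ ht _ (interior_subset hy), (add_sub_cancel_left _ _).symm, ?_⟩
  calc ‖(‖x‖ / r) • y + x + (‖x‖ / r) • y‖
      ≤ ‖(‖x‖ / r) • y‖ + ‖x‖ + ‖(‖x‖ / r) • y‖ := norm_add₃_le
    _ = (2 / r * ‖y‖ + 1) * ‖x‖ := by
      rw [norm_smul, Real.norm_of_nonneg ht]
      ring

lemma coneNorm_le (hh : h ∈ dualConeSet C) {x v w : EucSp m} (hv : v ∈ C) (hw : w ∈ C)
    (hx : x = v - w) : coneNorm C h x ≤ ⟪h, v + w⟫ := by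
  refine csInf_le ⟨0, ?_⟩ ⟨v, hv, w, hw, hx, rfl⟩
  rintro _ ⟨v, hv, w, hw, -, rfl⟩
  rw [inner_add_right]
  exact add_nonneg (hh v hv) (hh w hw)

lemma le_coneNorm (hC : IsProperCone C) {x : EucSp m} {r : ℝ}
    (hr : ∀ v ∈ C, ∀ w ∈ C, x = v - w → r ≤ ⟪h, v + w⟫) : r ≤ coneNorm C h x := by
  obtain ⟨_, -, hdecomp⟩ := hC.exists_decomposition
  obtain ⟨v, hv, w, hw, hx, -⟩ := hdecomp x
  refine le_csInf ⟨_, v, hv, w, hw, hx, rfl⟩ ?_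
  rintro _ ⟨v, hv, w, hw, hx, rfl⟩
  exact hr v hv w hw hx

lemma coneNorm_of_mem (hC : IsProperCone C) (hh : h ∈ dualConeSet C) {x : EucSp m}
    (hx : x ∈ C) : coneNorm C h x = ⟪h, x⟫ := by
  refine le_antisymm ?_ (le_coneNorm hC fun v _ w hw hxvw => ?_)
  · simpa only [add_zero] using coneNorm_le hh hx hC.zero_mem (sub_zero x).symm
  · rw [hxvw, inner_sub_right, inner_add_right]
    linarith [hh w hw]

lemma exists_mul_norm_le_coneNorm (hC : IsProperCone C) (hh : h ∈ interior (dualConeSet C)) :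
    ∃ c : ℝ, 0 < c ∧ ∀ x, c * ‖x‖ ≤ coneNorm C h x := by
  obtain ⟨c, hc, hhc⟩ := mem_interior_dualConeSet_iff.1 hh
  refine ⟨c, hc, fun x => le_coneNorm hC fun v hv w hw hx => ?_⟩
  calc c * ‖x‖ ≤ c * (‖v‖ + ‖w‖) := by rw [hx]; gcongr; exact norm_sub_le v w
    _ ≤ ⟪h, v + w⟫ := by rw [inner_add_right]; linarith [hhc v hv, hhc w hw]

lemma exists_coneNorm_le_mul_norm (hC : IsProperCone C) (hh : h ∈ dualConeSet C) :
    ∃ D : ℝ, 0 < D ∧ ∀ x, coneNorm C h x ≤ D * ‖x‖ := by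
  obtain ⟨D, hD, hdecomp⟩ := hC.exists_decomposition
  refine ⟨(‖h‖ + 1) * D, by positivity, fun x => ?_⟩
  obtain ⟨v, hv, w, hw, hx, hvw⟩ := hdecomp x
  calc coneNorm C h x ≤ ⟪h, v + w⟫ := coneNorm_le hh hv hw hx
    _ ≤ ‖h‖ * ‖v + w‖ := real_inner_le_norm _ _
    _ ≤ (‖h‖ + 1) * (D * ‖x‖) := by gcongr; exact le_add_of_nonneg_right zero_le_one
    _ = (‖h‖ + 1) * D * ‖x‖ := (mul_assoc _ _ _).symm

lemma coneNorm_smul_le (hC : IsProperCone C) (hh : h ∈ dualConeSet C) {a : ℝ} (ha : a ≠ 0)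
    (x : EucSp m) : coneNorm C h (a • x) ≤ |a| * coneNorm C h x := by
  have ha' : 0 < |a| := abs_pos.2 ha
  rw [← div_le_iff₀' ha']
  refine le_coneNorm hC fun v hv w hw hx => ?_
  rw [div_le_iff₀' ha', ← real_inner_smul_right, smul_add]
  have hv' := hC.smul_mem _ ha'.le v hv
  have hw' := hC.smul_mem _ ha'.le w hw
  rcases abs_cases a with ⟨habs, -⟩ | ⟨habs, -⟩
  · exact coneNorm_le hh hv' hw' (by rw [hx, habs, smul_sub])
  · rw [add_comm]
    exact coneNorm_le hh hw' hv' (by rw [hx, habs, ← smul_sub, neg_smul, ← smul_neg, neg_sub])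

lemma coneNorm_zero (hC : IsProperCone C) (hh : h ∈ dualConeSet C) : coneNorm C h 0 = 0 := by
  rw [coneNorm_of_mem hC hh hC.zero_mem, inner_zero_right]

lemma coneNorm_smul (hC : IsProperCone C) (hh : h ∈ dualConeSet C) (a : ℝ) (x : EucSp m) :
    coneNorm C h (a • x) = |a| * coneNorm C h x := by
  rcases eq_or_ne a 0 with rfl | ha
  · rw [zero_smul, coneNorm_zero hC hh, abs_zero, zero_mul]
  refine le_antisymm (coneNorm_smul_le hC hh ha x) ?_
  have hinv := coneNorm_smul_le hC hh (inv_ne_zero ha) (a • x)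
  rwa [inv_smul_smul₀ ha, abs_inv, ← div_eq_inv_mul, le_div_iff₀' (abs_pos.2 ha)] at hinv

lemma coneNorm_add_le (hC : IsProperCone C) (hh : h ∈ dualConeSet C) (x y : EucSp m) :
    coneNorm C h (x + y) ≤ coneNorm C h x + coneNorm C h y := by
  rw [← sub_le_iff_le_add]
  refine le_coneNorm hC fun v hv w hw hx => ?_
  rw [sub_le_comm]
  refine le_coneNorm hC fun v' hv' w' hw' hy => ?_
  rw [sub_le_iff_le_add, ← inner_add_right, add_add_add_comm]
  exact coneNorm_le hh (hC.add_mem hv' hv) (hC.add_mem hw' hw)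
    (by rw [hx, hy, add_sub_add_comm, add_comm])

lemma isNormFn_coneNorm (hC : IsProperCone C) (hh : h ∈ interior (dualConeSet C)) :
    IsNormFn (coneNorm C h) := by
  have hh' : h ∈ dualConeSet C := interior_subset hh
  obtain ⟨c, hc, hlower⟩ := exists_mul_norm_le_coneNorm hC hh
  refine ⟨fun x => le_trans (by positivity) (hlower x), fun x => ⟨fun hx => ?_, ?_⟩,
    coneNorm_smul hC hh', coneNorm_add_le hC hh'⟩
  · exact norm_le_zero_iff.1 (nonpos_of_mul_nonpos_right ((hlower x).trans_eq hx) hc)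
  · rintro rfl
    exact coneNorm_zero hC hh'

lemma isConeAbsolute_coneNorm (hC : IsProperCone C) (hh : h ∈ dualConeSet C) :
    IsConeAbsolute C (coneNorm C h) := by
  intro x
  rw [coneNorm]
  congr 1
  ext r
  refine exists_congr fun v => and_congr_right fun hv => exists_congr fun w =>
    and_congr_right fun hw => ?_
  rw [coneNorm_of_mem hC hh (hC.add_mem hv hw)]

lemma isConeLinear_coneNorm (hC : IsProperCone C) (hh : h ∈ dualConeSet C) :
    IsConeLinear C (coneNorm C h) :=
  ⟨h, hh, fun _ hx => coneNorm_of_mem hC hh hx⟩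

end ConeNorm

section OpNorm

open scoped Matrix.Norms.L2Operator

variable {ι κ : Type*} [Fintype ι] [Fintype κ]

lemma norm_toLp_comp_equiv (e : ι ≃ κ) (x : κ → ℝ) :
    ‖WithLp.toLp 2 (x ∘ e)‖ = ‖WithLp.toLp 2 x‖ := by
  simp only [EuclideanSpace.norm_eq, Function.comp_apply, e.sum_comp fun k => ‖x k‖ ^ 2]

variable [DecidableEq ι] [DecidableEq κ]

lemma l2_opNorm_le_of_mulVec {A : Matrix ι ι ℝ} {c : ℝ} (hc : 0 ≤ c)
    (hA : ∀ x : EuclideanSpace ℝ ι, ‖WithLp.toLp 2 (A.mulVec x.ofLp)‖ ≤ c * ‖x‖) : ‖A‖ ≤ c :=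
  ContinuousLinearMap.opNorm_le_bound _ hc hA

lemma l2_opNorm_one_le : ‖(1 : Matrix ι ι ℝ)‖ ≤ 1 :=
  l2_opNorm_le_of_mulVec zero_le_one fun x => by rw [Matrix.one_mulVec, one_mul]

lemma l2_opNorm_reindex_le (e : ι ≃ κ) (A : Matrix ι ι ℝ) : ‖Matrix.reindex e e A‖ ≤ ‖A‖ := by
  refine l2_opNorm_le_of_mulVec (norm_nonneg A) fun x => ?_
  rw [Matrix.reindex_apply, Matrix.submatrix_mulVec_equiv, Equiv.symm_symm, norm_toLp_comp_equiv]
  refine (A.l2_opNorm_mulVec (WithLp.toLp 2 (x.ofLp ∘ e))).trans_eq ?_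
  rw [norm_toLp_comp_equiv]

lemma l2_opNorm_reindex (e : ι ≃ κ) (A : Matrix ι ι ℝ) : ‖Matrix.reindex e e A‖ = ‖A‖ := by
  refine (l2_opNorm_reindex_le e A).antisymm ?_
  simpa using l2_opNorm_reindex_le e.symm (Matrix.reindex e e A)

lemma l2_opNorm_blockDiagonal_le {A : κ → Matrix ι ι ℝ} {c : ℝ} (hc : 0 ≤ c)
    (hA : ∀ k, ‖A k‖ ≤ c) : ‖Matrix.blockDiagonal A‖ ≤ c := by
  refine l2_opNorm_le_of_mulVec hc fun x => ?_
  have hblock : ∀ k i, ((Matrix.blockDiagonal A).mulVec x.ofLp) (i, k) =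
      (A k).mulVec (fun j => x (j, k)) i := fun k i => by
    simp [Matrix.mulVec, dotProduct, Matrix.blockDiagonal_apply, Fintype.sum_prod_type]
  have hslice : ∀ k, ∑ i, ‖(A k).mulVec (fun j => x (j, k)) i‖ ^ 2 ≤
      c ^ 2 * ∑ i, ‖x (i, k)‖ ^ 2 := fun k => by
    have h := Matrix.l2_opNorm_mulVec (A k) (WithLp.toLp 2 fun j => x (j, k))
    have h2 := pow_le_pow_left₀ (norm_nonneg _)
      (h.trans (mul_le_mul_of_nonneg_right (hA k) (norm_nonneg _))) 2
    rwa [mul_pow, EuclideanSpace.norm_sq_eq, EuclideanSpace.norm_sq_eq] at h2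
  rw [← sq_le_sq₀ (norm_nonneg _) (by positivity), mul_pow, EuclideanSpace.norm_sq_eq,
    EuclideanSpace.norm_sq_eq, Fintype.sum_prod_type_right, Fintype.sum_prod_type_right,
    Finset.mul_sum]
  simp only [hblock]
  exact Finset.sum_le_sum fun k _ => hslice k

lemma l2_opNorm_kronecker_le (A : Matrix ι ι ℝ) (B : Matrix κ κ ℝ) :
    ‖Matrix.kroneckerMap (· * ·) A B‖ ≤ ‖A‖ * ‖B‖ := by
  have hmul := Matrix.mul_kronecker_mul A (1 : Matrix ι ι ℝ) (1 : Matrix κ κ ℝ) B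
  rw [mul_one, one_mul, Matrix.kronecker_one, Matrix.one_kronecker] at hmul
  rw [hmul]
  refine (norm_mul_le _ _).trans ?_
  gcongr
  · exact l2_opNorm_blockDiagonal_le (norm_nonneg A) fun _ => le_rfl
  · rw [l2_opNorm_reindex]
    exact l2_opNorm_blockDiagonal_le (norm_nonneg B) fun _ => le_rfl

variable {m : ℕ}

lemma opNorm_eq_norm (A : Mat m) : opNorm A = ‖A‖ := rfl

lemma norm_kronPow_le (A : Mat m) (p : ℕ) : ‖kronPow A p‖ ≤ ‖A‖ ^ p := by
  induction p with
  | zero => exact l2_opNorm_one_le.trans_eq (pow_zero _).symm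
  | succ p ih =>
    rw [kronPow_succ, l2_opNorm_reindex, pow_succ]
    exact (l2_opNorm_kronecker_le _ _).trans (by gcongr)

instance matBorelSpace (m : ℕ) : BorelSpace (Mat m) :=
  inferInstanceAs (BorelSpace (Fin m → Fin m → ℝ))

instance matSecondCountableTopology (m : ℕ) : SecondCountableTopology (Mat m) :=
  inferInstanceAs (SecondCountableTopology (Fin m → Fin m → ℝ))

lemma ae_mem_msupport (μ : Measure (Mat m)) : ∀ᵐ A ∂μ, A ∈ msupport μ := by
  refine measure_null_of_locally_null _ fun A hA => ?_
  obtain ⟨ε, hε, hnull⟩ : ∃ ε : ℝ, 0 < ε ∧ μ (Metric.ball A ε) = 0 := by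
    have hA' : ¬ ∀ ε : ℝ, 0 < ε → μ {B | opNorm (B - A) < ε} ≠ 0 := hA
    simpa only [opNorm_eq_norm, ← dist_eq_norm, not_forall, not_not, exists_prop,
      Metric.ball] using hA'
  exact ⟨_, mem_nhdsWithin_of_mem_nhds (Metric.ball_mem_nhds A hε), hnull⟩

end OpNorm

section IidProduct

variable {X R : Type*} [MeasurableSpace X] {μ : Measure X} [SigmaFinite μ] {F : X → R}

lemma prod_reverse_ofFn_piFinSuccAbove_symm [Monoid R] (F : X → R) {k : ℕ}
    (z : X × (Fin k → X)) :
    (List.ofFn fun i => F ((MeasurableEquiv.piFinSuccAbove (fun _ => X) 0).symm z i)).reverse.prod =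
      (List.ofFn fun i => F (z.2 i)).reverse.prod * F z.1 := by
  rw [List.ofFn_succ, List.reverse_cons, List.prod_append, List.prod_singleton]
  rfl

variable [NormedRing R]

lemma integrable_prod_reverse_ofFn (hF : Integrable F μ) (k : ℕ) :
    Integrable (fun f : Fin k → X => (List.ofFn fun i => F (f i)).reverse.prod)
      (Measure.pi fun _ => μ) := by
  induction k with
  | zero =>
    rw [Measure.pi_of_empty]
    exact integrable_const (1 : R)
  | succ k ih =>
    rw [← (measurePreserving_piFinSuccAbove (fun _ : Fin (k + 1) => μ) 0).symm.integrable_comp_emb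
      (MeasurableEquiv.measurableEmbedding _)]
    simp only [Function.comp_def, prod_reverse_ofFn_piFinSuccAbove_symm]
    exact (ih.mul_prod hF).swap

lemma integral_prod_reverse_ofFn [NormedAlgebra ℝ R] [CompleteSpace R] (hF : Integrable F μ)
    (k : ℕ) : ∫ f : Fin k → X, (List.ofFn fun i => F (f i)).reverse.prod ∂(Measure.pi fun _ => μ) =
      (∫ x, F x ∂μ) ^ k := by
  induction k with
  | zero => simp [measureReal_def]
  | succ k ih =>
    rw [← (measurePreserving_piFinSuccAbove (fun _ : Fin (k + 1) => μ) 0).symm.integral_comp',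
      pow_succ, ← ih]
    simp only [prod_reverse_ofFn_piFinSuccAbove_symm]
    exact integral_prod_bilin (ContinuousLinearMap.mul ℝ R).flip hF
      (integrable_prod_reverse_ofFn hF k)

end IidProduct

section Moments

open scoped Matrix.Norms.L2Operator

variable {m : ℕ} {μ : Measure (Mat m)}

lemma prodRev_succ {k : ℕ} (f : Fin (k + 1) → Mat m) :
    prodRev f = prodRev (fun i : Fin k => f i.succ) * f 0 := by
  rw [prodRev, List.ofFn_succ, List.reverse_cons, List.prod_append, List.prod_singleton, prodRev]

lemma continuous_prodRev (k : ℕ) : Continuous (prodRev : (Fin k → Mat m) → Mat m) := by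
  induction k with
  | zero => exact continuous_of_const fun _ _ => by simp only [prodRev, List.ofFn_zero]
  | succ k ih =>
    simp only [funext prodRev_succ]
    exact (ih.comp (by fun_prop)).mul (continuous_apply 0)

lemma norm_prodRev_le {k : ℕ} (f : Fin k → Mat m) : ‖prodRev f‖ ≤ ∏ i, ‖f i‖ := by
  induction k with
  | zero => simpa [prodRev] using l2_opNorm_one_le (ι := Fin m)
  | succ k ih =>
    rw [prodRev_succ, Fin.prod_univ_succ, mul_comm]
    exact (norm_mul_le _ _).trans (by gcongr; exact ih _)

lemma kronPow_prodRev {k : ℕ} (f : Fin k → Mat m) (p : ℕ) :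
    kronPow (prodRev f) p = (List.ofFn fun i => kronPow (f i) p).reverse.prod := by
  have h := map_list_prod (kronPowHom m p) (List.ofFn f).reverse
  rwa [List.map_reverse, List.map_ofFn] at h

lemma kExpNorm_nonneg (p k : ℕ) : 0 ≤ kExpNorm μ p k :=
  integral_nonneg fun _ => pow_nonneg (norm_nonneg _) p

lemma HasBoundedSupport.integrable_opNorm_pow [IsFiniteMeasure μ] (hμ : HasBoundedSupport μ)
    (p : ℕ) : Integrable (fun A => opNorm A ^ p) μ := by
  obtain ⟨c, hc⟩ := hμ
  refine Integrable.of_bound (C := c ^ p) (continuous_norm.pow p).aestronglyMeasurable ?_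
  filter_upwards [ae_mem_msupport μ] with A hA
  rw [norm_pow, opNorm_eq_norm, norm_norm]
  exact pow_le_pow_left₀ (norm_nonneg A) (hc A hA) p

lemma integrable_kronPow {p : ℕ} (hμ : Integrable (fun A => opNorm A ^ p) μ) :
    Integrable (fun A => kronPow A p) μ :=
  hμ.mono' (continuous_kronPow p).aestronglyMeasurable (ae_of_all _ fun A => norm_kronPow_le A p)

lemma kronExp_eq_integral {p : ℕ} (hμ : Integrable (fun A => opNorm A ^ p) μ) :
    kronExp μ p = ∫ A, kronPow A p ∂μ := by
  ext i j
  exact (LinearMap.toContinuousLinearMap (Matrix.entryLinearMap ℝ ℝ i j)).integral_comp_comm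
    (integrable_kronPow hμ)

lemma integrable_inner_kronPow {p : ℕ} (hμ : Integrable (fun A => opNorm A ^ p) μ)
    (x y : EucSp (m ^ p)) :
    Integrable (fun A => ⟪x, Matrix.toEuclideanLin (kronPow A p) y⟫) μ :=
  (LinearMap.toContinuousLinearMap (innerₛₗ ℝ x ∘ₗ LinearMap.applyₗ y ∘ₗ
    (Matrix.toEuclideanLin (𝕜 := ℝ)).toLinearMap)).integrable_comp (integrable_kronPow hμ)

lemma integral_inner_kronPow {p : ℕ} (hμ : Integrable (fun A => opNorm A ^ p) μ)
    (x y : EucSp (m ^ p)) : ∫ A, ⟪x, Matrix.toEuclideanLin (kronPow A p) y⟫ ∂μ =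
      ⟪x, Matrix.toEuclideanLin (kronExp μ p) y⟫ := by
  rw [kronExp_eq_integral hμ]
  exact (LinearMap.toContinuousLinearMap (innerₛₗ ℝ x ∘ₗ LinearMap.applyₗ y ∘ₗ
    (Matrix.toEuclideanLin (𝕜 := ℝ)).toLinearMap)).integral_comp_comm (integrable_kronPow hμ)

lemma leavesInv_kronExp {p : ℕ} (hμ : Integrable (fun A => opNorm A ^ p) μ)
    {C : Set (EucSp (m ^ p))} (hC : IsProperCone C)
    (hinv : ∀ B ∈ msupport μ, LeavesInv (kronPow B p) C) : LeavesInv (kronExp μ p) C := by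
  intro x hx
  rw [← hC.dualConeSet_dualConeSet]
  intro f hf
  rw [real_inner_comm, ← integral_inner_kronPow hμ]
  refine integral_nonneg_of_ae ?_
  filter_upwards [ae_mem_msupport μ] with A hA
  exact hf _ (hinv A hA x hx)

variable [SigmaFinite μ]

lemma integrable_opNorm_prodRev_pow {p : ℕ} (hμ : Integrable (fun A => opNorm A ^ p) μ) (k : ℕ) :
    Integrable (fun f : Fin k → Mat m => opNorm (prodRev f) ^ p) (Measure.pi fun _ => μ) := by
  refine (Integrable.fintype_prod fun _ : Fin k => hμ).mono'
    ((continuous_norm.comp (continuous_prodRev k)).pow p).aestronglyMeasurable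
    (ae_of_all _ fun f => ?_)
  rw [norm_pow, opNorm_eq_norm, norm_norm, Finset.prod_pow]
  exact pow_le_pow_left₀ (norm_nonneg _) (norm_prodRev_le f) p

lemma kExpNorm_le_pow {p : ℕ} (hμ : Integrable (fun A => opNorm A ^ p) μ) (k : ℕ) :
    kExpNorm μ p k ≤ (∫ A, opNorm A ^ p ∂μ) ^ k := by
  have hpi := integral_fintype_prod_eq_pow (ι := Fin k) (μ := μ) fun A => opNorm A ^ p
  rw [Fintype.card_fin] at hpi
  rw [← hpi]
  refine integral_mono (integrable_opNorm_prodRev_pow hμ k) (Integrable.fintype_prod fun _ => hμ)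
    fun f => ?_
  rw [Finset.prod_pow]
  exact pow_le_pow_left₀ (norm_nonneg _) (norm_prodRev_le f) p

lemma norm_kronExp_pow_le {p : ℕ} (hμ : Integrable (fun A => opNorm A ^ p) μ) (k : ℕ) :
    ‖kronExp μ p ^ k‖ ≤ kExpNorm μ p k := by
  rw [kronExp_eq_integral hμ, ← integral_prod_reverse_ofFn (integrable_kronPow hμ)]
  simp only [← kronPow_prodRev]
  exact norm_integral_le_of_norm_le (integrable_opNorm_prodRev_pow hμ k)
    (ae_of_all _ fun f => norm_kronPow_le (prodRev f) p)

end Moments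

section ContractedFunctional

open scoped Matrix.Norms.L2Operator

variable {m : ℕ} {A : Mat m} {C : Set (EucSp m)} {h : EucSp m}

lemma eventually_inner_pow_le (hlim : Tendsto (fun k => A ^ k) atTop (𝓝 0))
    (hh : h ∈ interior (dualConeSet C)) :
    ∀ᶠ k in atTop, ∀ x ∈ C, ⟪h, Matrix.toEuclideanLin (A ^ k) x⟫ ≤ ⟪h, x⟫ := by
  obtain ⟨c, hc, hhc⟩ := mem_interior_dualConeSet_iff.1 hh
  have hsmall : Tendsto (fun k => ‖h‖ * ‖A ^ k‖) atTop (𝓝 0) := by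
    simpa only [norm_zero, mul_zero] using hlim.norm.const_mul ‖h‖
  filter_upwards [hsmall.eventually_le_const hc] with k hk x hx
  calc ⟪h, Matrix.toEuclideanLin (A ^ k) x⟫ ≤ ‖h‖ * ‖Matrix.toEuclideanLin (A ^ k) x‖ :=
        real_inner_le_norm _ _
    _ ≤ ‖h‖ * (‖A ^ k‖ * ‖x‖) := by gcongr; exact (A ^ k).l2_opNorm_mulVec x
    _ ≤ c * ‖x‖ := by rw [← mul_assoc]; gcongr
    _ ≤ ⟪h, x⟫ := hhc x hx

lemma inner_le_inner_geom_sum (hA : LeavesInv A C) (hh : h ∈ dualConeSet C) {N : ℕ} (hN : 0 < N)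
    {x : EucSp m} (hx : x ∈ C) :
    ⟪h, x⟫ ≤ ⟪h, Matrix.toEuclideanLin (∑ k ∈ Finset.range N, A ^ k) x⟫ := by
  rw [map_sum, LinearMap.sum_apply, inner_sum]
  refine le_of_eq_of_le ?_ (Finset.single_le_sum (fun k _ => hh _ (hA.pow k x hx))
    (Finset.mem_range.2 hN))
  rw [pow_zero, Matrix.toLpLin_one, LinearMap.id_apply]

lemma exists_mem_interior_dualConeSet_inner_le (hC : IsProperCone C) (hA : LeavesInv A C)
    (hlim : Tendsto (fun k => A ^ k) atTop (𝓝 0)) :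
    ∃ h ∈ interior (dualConeSet C), ∀ x ∈ C, ⟪h, Matrix.toEuclideanLin A x⟫ ≤ ⟪h, x⟫ := by
  obtain ⟨h₀, hh₀⟩ := hC.interior_dualConeSet_nonempty
  obtain ⟨c, hc, hhc⟩ := mem_interior_dualConeSet_iff.1 hh₀
  obtain ⟨N, hdecay, hN⟩ := ((eventually_inner_pow_le hlim hh₀).and (eventually_gt_atTop 0)).exists
  set G : Mat m := ∑ k ∈ Finset.range N, A ^ k
  refine ⟨Matrix.toEuclideanLin G.transpose h₀,
    mem_interior_dualConeSet_iff.2 ⟨c, hc, fun x hx => ?_⟩, fun x hx => ?_⟩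
  · rw [inner_toEuclideanLin_transpose]
    exact (hhc x hx).trans (inner_le_inner_geom_sum hA (interior_subset hh₀) hN hx)
  · have hgeom : G * A = G + (A ^ N - 1) := by
      rw [← geom_sum_mul, mul_sub, mul_one, add_sub_cancel]
    rw [inner_toEuclideanLin_transpose, inner_toEuclideanLin_transpose, ← LinearMap.comp_apply,
      ← Matrix.toLpLin_mul_same, hgeom, map_add, map_sub, Matrix.toLpLin_one, LinearMap.add_apply,
      LinearMap.sub_apply, LinearMap.id_apply, inner_add_right, inner_sub_right]
    linarith [hdecay x hx]

end ContractedFunctional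

section Growth

open scoped Matrix.Norms.L2Operator

variable {m p : ℕ} {μ : Measure (Mat m)} [SigmaFinite μ] {γ : ℝ}

lemma isBoundedUnder_kExpNorm_rpow (hμ : Integrable (fun A => opNorm A ^ p) μ) :
    IsBoundedUnder (· ≤ ·) atTop fun k : ℕ => kExpNorm μ p k ^ (1 / (p * k : ℝ)) := by
  set M : ℝ := ∫ A, opNorm A ^ p ∂μ
  have hM : 0 ≤ M := integral_nonneg fun _ => pow_nonneg (norm_nonneg _) p
  refine isBoundedUnder_of_eventually_le (a := M ^ (p : ℝ)⁻¹) ?_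
  filter_upwards [eventually_ne_atTop 0] with k hk
  have hk' : (k : ℝ) ≠ 0 := Nat.cast_ne_zero.2 hk
  calc kExpNorm μ p k ^ (1 / (p * k : ℝ)) ≤ (M ^ k) ^ (1 / (p * k : ℝ)) :=
        Real.rpow_le_rpow (kExpNorm_nonneg p k) (kExpNorm_le_pow hμ k) (by positivity)
    _ = M ^ (p : ℝ)⁻¹ := by
        rw [← Real.rpow_natCast, ← Real.rpow_mul hM, one_div, mul_inv, mul_left_comm,
          mul_inv_cancel₀ hk', mul_one]

lemma eventually_kExpNorm_rpow_lt (hμ : Integrable (fun A => opNorm A ^ p) μ)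
    (hγ : pRadius μ p < γ) : ∀ᶠ k : ℕ in atTop, kExpNorm μ p k ^ (1 / (p * k : ℝ)) < γ :=
  eventually_lt_of_limsup_lt hγ (isBoundedUnder_kExpNorm_rpow hμ)

lemma pos_of_pRadius_lt (hμ : Integrable (fun A => opNorm A ^ p) μ) (hγ : pRadius μ p < γ) :
    0 < γ := by
  obtain ⟨k, hk⟩ := (eventually_kExpNorm_rpow_lt hμ hγ).exists
  exact (Real.rpow_nonneg (kExpNorm_nonneg p k) _).trans_lt hk

lemma eventually_kExpNorm_lt_pow (hp : p ≠ 0) (hμ : Integrable (fun A => opNorm A ^ p) μ)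
    (hγ : pRadius μ p < γ) : ∀ᶠ k in atTop, kExpNorm μ p k < (γ ^ p) ^ k := by
  filter_upwards [eventually_kExpNorm_rpow_lt hμ hγ, eventually_ne_atTop 0] with k hk hk0
  have hnn : 0 ≤ kExpNorm μ p k := kExpNorm_nonneg p k
  have hpk : p * k ≠ 0 := mul_ne_zero hp hk0
  rw [← pow_mul, ← Real.rpow_inv_natCast_pow hnn hpk]
  refine pow_lt_pow_left₀ ?_ (Real.rpow_nonneg hnn _) hpk
  rwa [Nat.cast_mul, ← one_div]

lemma kExpNorm_isLittleO (hp : p ≠ 0) (hμ : Integrable (fun A => opNorm A ^ p) μ)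
    (hγ : pRadius μ p < γ) : kExpNorm μ p =o[atTop] fun k => (γ ^ p) ^ k := by
  obtain ⟨δ, hδ, hδγ⟩ := exists_between hγ
  have hδ0 : 0 ≤ δ := (pos_of_pRadius_lt hμ hδ).le
  refine Asymptotics.IsBigO.trans_isLittleO (.of_norm_eventuallyLE ?_)
    (isLittleO_pow_pow_of_lt_left (pow_nonneg hδ0 p) (pow_lt_pow_left₀ hδγ hδ0 hp))
  filter_upwards [eventually_kExpNorm_lt_pow hp hμ hδ] with k hk
  rw [Real.norm_of_nonneg (kExpNorm_nonneg p k)]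
  exact hk.le

lemma tendsto_smul_kronExp_pow (hp : p ≠ 0) (hμ : Integrable (fun A => opNorm A ^ p) μ)
    (hγ : pRadius μ p < γ) :
    Tendsto (fun k => ((γ ^ p)⁻¹ • kronExp μ p) ^ k) atTop (𝓝 0) := by
  have hγp : 0 < γ ^ p := pow_pos (pos_of_pRadius_lt hμ hγ) p
  refine squeeze_zero_norm (fun k => ?_) (kExpNorm_isLittleO hp hμ hγ).tendsto_div_nhds_zero
  rw [smul_pow, norm_smul, norm_pow, norm_inv, Real.norm_of_nonneg hγp.le, inv_pow,
    ← div_eq_inv_mul]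
  gcongr
  exact norm_kronExp_pow_le hμ k

lemma exists_kronExp_contracted_functional (hp : p ≠ 0)
    (hμ : Integrable (fun A => opNorm A ^ p) μ) (hγ : pRadius μ p < γ)
    {C : Set (EucSp (m ^ p))} (hC : IsProperCone C)
    (hinv : ∀ B ∈ msupport μ, LeavesInv (kronPow B p) C) :
    ∃ h ∈ interior (dualConeSet C), ∀ x ∈ C,
      ⟪h, Matrix.toEuclideanLin (kronExp μ p) x⟫ ≤ γ ^ p * ⟪h, x⟫ := by
  have hγp : 0 < γ ^ p := pow_pos (pos_of_pRadius_lt hμ hγ) p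
  have hscaled : LeavesInv ((γ ^ p)⁻¹ • kronExp μ p) C := fun x hx => by
    rw [map_smul, LinearMap.smul_apply]
    exact hC.smul_mem _ (inv_nonneg.2 hγp.le) _ (leavesInv_kronExp hμ hC hinv x hx)
  obtain ⟨h, hh, hcontr⟩ := exists_mem_interior_dualConeSet_inner_le hC hscaled
    (tendsto_smul_kronExp_pow hp hμ hγ)
  refine ⟨h, hh, fun x hx => ?_⟩
  have hx' := hcontr x hx
  rwa [map_smul, LinearMap.smul_apply, real_inner_smul_right, inv_mul_le_iff₀ hγp] at hx'

end Growth

section Lyapunov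

variable {m p : ℕ} {μ : Measure (Mat m)} {γ : ℝ} {C : Set (EucSp (m ^ p))} {h : EucSp (m ^ p)}

lemma integral_coneNorm_vecKronPow_le (hμ : Integrable (fun A => opNorm A ^ p) μ)
    (hinv : ∀ B ∈ msupport μ, LeavesInv (kronPow B p) C)
    (hC : IsProperCone C) (hh : h ∈ interior (dualConeSet C)) {x : EucSp m}
    {v w : EucSp (m ^ p)} (hv : v ∈ C) (hw : w ∈ C) (hx : vecKronPow x p = v - w) :
    ∫ A, coneNorm C h (vecKronPow (Matrix.toEuclideanLin A x) p) ∂μ ≤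
      ⟪h, Matrix.toEuclideanLin (kronExp μ p) (v + w)⟫ := by
  rw [← integral_inner_kronPow hμ]
  refine integral_mono_of_nonneg (ae_of_all _ fun A => (isNormFn_coneNorm hC hh).1 _)
    (integrable_inner_kronPow hμ _ _) ?_
  filter_upwards [ae_mem_msupport μ] with A hA
  rw [← toEuclideanLin_kronPow_vecKronPow, hx, map_sub, map_add]
  exact coneNorm_le (interior_subset hh) (hinv A hA v hv) (hinv A hA w hw) rfl

lemma isStochLyap_coneNorm (hμ : Integrable (fun A => opNorm A ^ p) μ)
    (hinv : ∀ B ∈ msupport μ, LeavesInv (kronPow B p) C) (hC : IsProperCone C)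
    (hh : h ∈ interior (dualConeSet C)) (hγ : 0 < γ)
    (hcontr : ∀ x ∈ C, ⟪h, Matrix.toEuclideanLin (kronExp μ p) x⟫ ≤ γ ^ p * ⟪h, x⟫) :
    IsStochLyap μ p γ fun x => coneNorm C h (vecKronPow x p) := by
  obtain ⟨c, hc, hlower⟩ := exists_mul_norm_le_coneNorm hC hh
  obtain ⟨D, hD, hupper⟩ := exists_coneNorm_le_mul_norm hC (interior_subset hh)
  have hγp : 0 < γ ^ p := pow_pos hγ p
  refine ⟨⟨c, hc, D, hD, fun x => ?_⟩, fun x => ?_⟩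
  · rw [← norm_vecKronPow]
    exact ⟨hlower _, hupper _⟩
  · rw [← div_le_iff₀' hγp]
    refine le_coneNorm hC fun v hv w hw hx => ?_
    rw [div_le_iff₀' hγp]
    exact (integral_coneNorm_vecKronPow_le hμ hinv hC hh hv hw hx).trans
      (hcontr _ (hC.add_mem hv hw))

end Lyapunov

theorem stmt19_general (n : ℕ) (μ : Measure (Mat n)) [SigmaFinite μ]
    (K : Set (EucSp n)) (hK : IsProperCone K) (hinv : SetLeavesInv (msupport μ) K)
    (p : ℕ) (hp : p ≠ 0) (hμ : Integrable (fun A => opNorm A ^ p) μ)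
    (γ : ℝ) (hγ : pRadius μ p < γ) :
    ∃ Kp : Set (EucSp (n ^ p)), IsProperCone Kp ∧
      (∀ B ∈ msupport μ, LeavesInv (kronPow B p) Kp) ∧
      ∃ g : EucSp (n ^ p) → ℝ, IsNormFn g ∧ IsConeAbsolute Kp g ∧ IsConeLinear Kp g ∧
        IsStochLyap μ p γ (fun x : EucSp n => g (vecKronPow x p)) := by
  have hC : IsProperCone (kronCone K p) := hK.kronCone p
  have hCinv : ∀ B ∈ msupport μ, LeavesInv (kronPow B p) (kronCone K p) :=
    fun B hB => (hinv B hB).kronCone p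
  obtain ⟨h, hh, hcontr⟩ := exists_kronExp_contracted_functional hp hμ hγ hC hCinv
  have hγ0 : 0 < γ := pos_of_pRadius_lt hμ hγ
  exact ⟨kronCone K p, hC, hCinv, coneNorm (kronCone K p) h, isNormFn_coneNorm hC hh,
    isConeAbsolute_coneNorm hC (interior_subset hh), isConeLinear_coneNorm hC (interior_subset hh),
    isStochLyap_coneNorm hμ hCinv hC hh hγ0 hcontr⟩

/-- If `supp μ` leaves a proper cone invariant and `Σ_μ` is `p`th mean stable
with `γ ∈ (ρ_{p,μ}, 1)`, then there are a proper cone `K_p ⊆ ℝ^{n^p}` left invariant by the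
`p`-th Kronecker powers of matrices in `supp μ` and a cone linear absolute norm `‖·‖_g` on
`ℝ^{n^p}` w.r.t. `K_p` such that `V(x) = ‖x^{⊗p}‖_g` is a stochastic Lyapunov function of
degree `p` with growth rate `γ`. -/
theorem stmt19 (n : ℕ) (hn : 1 ≤ n) (μ : Measure (Mat n)) [IsProbabilityMeasure μ]
    (hbdd : HasBoundedSupport μ)
    (K : Set (EucSp n)) (hK : IsProperCone K) (hinv : SetLeavesInv (msupport μ) K)
    (p : ℕ) (hp : 1 ≤ p) (hstab : pRadius μ p < 1)
    (γ : ℝ) (hγl : pRadius μ p < γ) (hγ1 : γ < 1) :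
    ∃ Kp : Set (EucSp (n ^ p)), IsProperCone Kp ∧
      (∀ B ∈ msupport μ, LeavesInv (kronPow B p) Kp) ∧
      ∃ g : EucSp (n ^ p) → ℝ, IsNormFn g ∧ IsConeAbsolute Kp g ∧ IsConeLinear Kp g ∧
        IsStochLyap μ p γ (fun x : EucSp n => g (vecKronPow x p)) := by
  exact stmt19_general n μ K hK hinv p (Nat.one_le_iff_ne_zero.1 hp)
    (hbdd.integrable_opNorm_pow p) γ hγl

end
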